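/- Let Φ : ℝ → ℝ and v : ℝ → ℝ be smooth functions with Φ(0) = 0 and v(0) = 0, and let c ∈ ℝ. Then for all integers j ≥ 0 and M ≥ 1, ∂_ξ^j ∂_ζ^M [ Φ( c e^{ξ} v(ζ) ) ] evaluated at (ξ,ζ) = (0,0) equals Σ_{k=1}^{M} (c^k k^j / k!) Φ^{(k)}(0) (d^M/dζ^M)(v(ζ)^k)|_{ζ=0}. -/

import Mathlib

/-!
By Faà di Bruno's formula, `(g ∘ f)⁽ⁿ⁾(x)` depends on `g` only through its derivatives of order at
most `n` at `f x`, so `g` may be replaced by its Taylor polynomial there. For `g = Φ` and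
`f = c e^ξ v`, the `k`-th Taylor term depends on `ξ` only through the factor `e^{kξ}`, and each
`ξ`-derivative at `0` multiplies it by `k`.
-/

section Composition

variable {𝕜 E : Type*} [NontriviallyNormedField 𝕜] [NormedAddCommGroup E] [NormedSpace 𝕜 E]
  {f : 𝕜 → 𝕜} {x : 𝕜} {n : ℕ}

theorem iteratedDeriv_comp_congr_of_iteratedDeriv_eq {g₁ g₂ : 𝕜 → E}
    (hg₁ : ContDiffAt 𝕜 n g₁ (f x)) (hg₂ : ContDiffAt 𝕜 n g₂ (f x)) (hf : ContDiffAt 𝕜 n f x)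
    (h : ∀ k ≤ n, iteratedDeriv k g₁ (f x) = iteratedDeriv k g₂ (f x)) :
    iteratedDeriv n (g₁ ∘ f) x = iteratedDeriv n (g₂ ∘ f) x := by
  rw [iteratedDeriv_scomp_eq_sum_orderedFinpartition hg₁ hf le_rfl,
    iteratedDeriv_scomp_eq_sum_orderedFinpartition hg₂ hf le_rfl]
  exact Finset.sum_congr rfl fun p _ ↦ by rw [h p.length p.length_le]

theorem iteratedDeriv_sum_smul_const {ι : Type*} {s : Finset ι} {φ : ι → 𝕜 → 𝕜}
    (hφ : ∀ i ∈ s, ContDiffAt 𝕜 n (φ i) x) (u : ι → E) :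
    iteratedDeriv n (fun z ↦ ∑ i ∈ s, φ i z • u i) x = ∑ i ∈ s, iteratedDeriv n (φ i) x • u i := by
  have hterm (i : ι) (hi : i ∈ s) : ContDiffAt 𝕜 n (fun z ↦ φ i z • u i) x :=
    (hφ i hi).smul contDiffAt_const
  rw [iteratedDeriv_fun_sum hterm]
  exact Finset.sum_congr rfl fun i hi ↦ iteratedDeriv_smul_const (hφ i hi) (u i)

/-- The Taylor polynomial of order `n` of `g` at `a`, as a function of `z`. Mathlib's
`taylorWithinEval` is restricted to functions of a real variable. -/
noncomputable def taylorPolyAt (g : 𝕜 → E) (n : ℕ) (a z : 𝕜) : E :=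
  ∑ k ∈ Finset.range (n + 1), ((k.factorial : 𝕜)⁻¹ * (z - a) ^ k) • iteratedDeriv k g a

theorem contDiff_taylorPolyAt (g : 𝕜 → E) (n : ℕ) (a : 𝕜) {m : WithTop ℕ∞} :
    ContDiff 𝕜 m (taylorPolyAt g n a) := by
  unfold taylorPolyAt
  fun_prop

theorem iteratedDeriv_sub_const_pow_self (a : 𝕜) (i k : ℕ) :
    iteratedDeriv i (fun z ↦ (z - a) ^ k) a = if i = k then (k.factorial : 𝕜) else 0 := by
  simp only [iteratedDeriv_comp_sub_const i (fun z : 𝕜 ↦ z ^ k) a, sub_self,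
    iteratedDeriv_fun_pow_zero, Nat.cast_ite, Nat.cast_zero]

theorem iteratedDeriv_taylorPolyAt_comp (g : 𝕜 → E) (a : 𝕜) (m : ℕ) (hf : ContDiffAt 𝕜 n f x) :
    iteratedDeriv n (taylorPolyAt g m a ∘ f) x =
      ∑ k ∈ Finset.range (m + 1),
        ((k.factorial : 𝕜)⁻¹ * iteratedDeriv n (fun z ↦ (f z - a) ^ k) x) •
          iteratedDeriv k g a := by
  have hterm (k : ℕ) : ContDiffAt 𝕜 n (fun z ↦ (k.factorial : 𝕜)⁻¹ * (f z - a) ^ k) x := by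
    fun_prop
  simp only [Function.comp_def, taylorPolyAt]
  rw [iteratedDeriv_sum_smul_const fun k _ ↦ hterm k]
  simp only [iteratedDeriv_const_mul_field]

theorem iteratedDeriv_taylorPolyAt_self [CharZero 𝕜] (g : 𝕜 → E) (a : 𝕜) {i : ℕ} (hi : i ≤ n) :
    iteratedDeriv i (taylorPolyAt g n a) a = iteratedDeriv i g a := by
  have hfact : (i.factorial : 𝕜) ≠ 0 := Nat.cast_ne_zero.mpr i.factorial_ne_zero
  have hmem : i < n + 1 := Nat.lt_succ_of_le hi
  have h := iteratedDeriv_taylorPolyAt_comp g a n (contDiffAt_id (n := i) (x := a))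
  simpa [iteratedDeriv_sub_const_pow_self, hfact, hmem] using h

theorem iteratedDeriv_comp_eq_sum_iteratedDeriv_pow [CharZero 𝕜] {g : 𝕜 → E}
    (hg : ContDiffAt 𝕜 n g (f x)) (hf : ContDiffAt 𝕜 n f x) :
    iteratedDeriv n (g ∘ f) x =
      ∑ k ∈ Finset.range (n + 1),
        ((k.factorial : 𝕜)⁻¹ * iteratedDeriv n (fun z ↦ (f z - f x) ^ k) x) •
          iteratedDeriv k g (f x) := by
  rw [← iteratedDeriv_taylorPolyAt_comp g (f x) n hf]
  exact iteratedDeriv_comp_congr_of_iteratedDeriv_eq hg (contDiff_taylorPolyAt g n (f x)).contDiffAt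
    hf fun k hk ↦ (iteratedDeriv_taylorPolyAt_self g (f x) hk).symm

theorem iteratedDeriv_comp_const_mul_eq_sum_of_apply_eq_zero [CharZero 𝕜] {g : 𝕜 → E}
    (hg : ContDiffAt 𝕜 n g 0) (hf : ContDiffAt 𝕜 n f x) (hfx : f x = 0) (hn : n ≠ 0) (a : 𝕜) :
    iteratedDeriv n (fun z ↦ g (a * f z)) x =
      ∑ k ∈ Finset.Icc 1 n,
        (a ^ k / (k.factorial : 𝕜) * iteratedDeriv n (fun z ↦ f z ^ k) x) •
          iteratedDeriv k g 0 := by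
  have hzero : a * f x = 0 := by rw [hfx, mul_zero]
  have hexpand := iteratedDeriv_comp_eq_sum_iteratedDeriv_pow (f := fun z ↦ a * f z)
    (hzero ▸ hg) (contDiffAt_const.mul hf)
  simp only [Function.comp_def, hzero, sub_zero, mul_pow, iteratedDeriv_const_mul_field] at hexpand
  rw [hexpand, Finset.sum_range_eq_add_Ico _ n.succ_pos]
  simp [iteratedDeriv_const, hn, div_eq_inv_mul, mul_assoc, Finset.Ico_add_one_right_eq_Icc]

end Composition

theorem stmt_11_general {E : Type*} [NormedAddCommGroup E] [NormedSpace ℝ E] {Φ : ℝ → E}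
    {v : ℝ → ℝ} {M : ℕ} (hΦ : ContDiffAt ℝ M Φ 0) (hv : ContDiffAt ℝ M v 0) (hv0 : v 0 = 0)
    (hM : M ≠ 0) (c : ℝ) (j : ℕ) :
    iteratedDeriv j (fun ξ ↦ iteratedDeriv M (fun ζ ↦ Φ (c * Real.exp ξ * v ζ)) 0) 0 =
      ∑ k ∈ Finset.Icc 1 M,
        (c ^ k * (k : ℝ) ^ j / (k.factorial : ℝ) * iteratedDeriv M (fun ζ ↦ v ζ ^ k) 0) •
          iteratedDeriv k Φ 0 := by
  have hξ (ξ : ℝ) : iteratedDeriv M (fun ζ ↦ Φ (c * Real.exp ξ * v ζ)) 0 =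
      ∑ k ∈ Finset.Icc 1 M,
        (c ^ k / (k.factorial : ℝ) * iteratedDeriv M (fun ζ ↦ v ζ ^ k) 0 * Real.exp (k * ξ)) •
          iteratedDeriv k Φ 0 := by
    rw [iteratedDeriv_comp_const_mul_eq_sum_of_apply_eq_zero hΦ hv hv0 hM]
    refine Finset.sum_congr rfl fun k _ ↦ ?_
    rw [mul_pow, ← Real.exp_nat_mul]
    ring_nf
  simp only [hξ]
  rw [iteratedDeriv_sum_smul_const fun k _ ↦ by fun_prop]
  refine Finset.sum_congr rfl fun k _ ↦ ?_
  simp only [iteratedDeriv_const_mul_field, iteratedDeriv_exp_const_mul, mul_zero, Real.exp_zero]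
  ring_nf

/-- bookkeeping identity for mixed derivatives of `Φ(c e^ξ v(ζ))`
at the origin. -/
theorem stmt_11 (Φ v : ℝ → ℝ) (hΦ : ContDiff ℝ (⊤ : ℕ∞) Φ) (hv : ContDiff ℝ (⊤ : ℕ∞) v)
    (hΦ0 : Φ 0 = 0) (hv0 : v 0 = 0) (c : ℝ) :
    ∀ j M : ℕ, 1 ≤ M →
      iteratedDeriv j (fun ξ => iteratedDeriv M (fun ζ => Φ (c * Real.exp ξ * v ζ)) 0) 0 =
        ∑ k ∈ Finset.Icc 1 M,
          (c ^ k * (k : ℝ) ^ j / (Nat.factorial k : ℝ)) * iteratedDeriv k Φ 0 *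
            iteratedDeriv M (fun ζ => v ζ ^ k) 0 := by
  intro j M hM
  simpa only [smul_eq_mul, mul_right_comm] using
    stmt_11_general (contDiff_infty.mp hΦ M).contDiffAt (contDiff_infty.mp hv M).contDiffAt
      hv0 (Nat.one_le_iff_ne_zero.mp hM) c j
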